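/- If 𝒟 is a subclass of the class ℱ of all k×k filter matrices and every filter matrix in 𝒟 is identifiable (𝒟 ⊆ 𝓘), then every filter matrix in the closure 𝒟̄ is identifiable (𝒟̄ ⊆ 𝓘). -/

import Mathlib

open scoped BigOperators Classical

namespace FilteredMarkov

variable {k : ℕ}

/-- Probability of a complete realization `x` of the chain (of length `n+1`,
i.e. with `n` transitions), given the known initial state `s`, under the
transition probabilities `p`. -/
noncomputable def chainProb {n : ℕ} (p : Fin k → Fin k → ℝ) (s : Fin k)
    (x : Fin (n + 1) → Fin k) : ℝ :=
  (if x 0 = s then (1 : ℝ) else 0) * ∏ i : Fin n, p (x i.castSucc) (x i.succ)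

/-- Extension of a finite realization to all of `ℕ` (values beyond the range
are junk, obtained by reducing the index mod `n+1`). -/
def extChain {n : ℕ} (x : Fin (n + 1) → Fin k) : ℕ → Fin k :=
  fun t => x ⟨t % (n + 1), Nat.mod_lt _ (Nat.succ_pos n)⟩

/-- The filtered chain `φ_F(x)`: the state at position `t` is retained if the
transition into it (`f_{x_{t-1}, x_t} = 1`) or out of it (`f_{x_t, x_{t+1}} = 1`)
is recorded by the filter matrix `F`; otherwise it is replaced by a blank (`none`). -/
def phi {n : ℕ} (F : Fin k → Fin k → Bool) (x : Fin (n + 1) → Fin k) :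
    Fin (n + 1) → Option (Fin k) :=
  fun t =>
    if (0 < (t : ℕ) ∧ F (extChain x ((t : ℕ) - 1)) (x t) = true) ∨
        ((t : ℕ) + 1 < n + 1 ∧ F (x t) (extChain x ((t : ℕ) + 1)) = true)
    then some (x t) else none

/-- The probability distribution of the filtered chain `φ_F(X)` (as a probability
mass function on possible filtered sequences), for a chain of length `n+1` with
known initial state `s` and transition probabilities `p`. -/
noncomputable def obsDist (n : ℕ) (p : Fin k → Fin k → ℝ) (s : Fin k)
    (F : Fin k → Fin k → Bool) : (Fin (n + 1) → Option (Fin k)) → ℝ :=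
  fun y => ∑ x : Fin (n + 1) → Fin k, if phi F x = y then chainProb p s x else 0

/-- The parameter space: all the transition probabilities are strictly between
0 and 1 and each row of the transition probability matrix sums to 1. -/
def IsParam (p : Fin k → Fin k → ℝ) : Prop :=
  (∀ i j, 0 < p i j ∧ p i j < 1) ∧ ∀ i, ∑ j, p i j = 1

/-- A filter matrix `F` is identifiable (`F ∈ 𝓘`) if any two distinct values of the
parameter `θ` (the transition probabilities) induce distinct probability
distributions of the filtered chain `φ_F(X)` (for a sufficiently long chain). -/
def Identifiable (k : ℕ) (F : Fin k → Fin k → Bool) : Prop :=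
  ∀ p q : Fin k → Fin k → ℝ, IsParam p → IsParam q → p ≠ q →
    ∃ (n : ℕ) (s : Fin k), obsDist n p s F ≠ obsDist n q s F

/-!
If `D ≤ F` entrywise, then every transition recorded by `D` is recorded by `F`, and both of its
endpoints are visible in `φ_F(x)`. Hence `φ_D(x)` is a function of `φ_F(x)`, so the distribution of
`φ_F(X)` determines that of `φ_D(X)`, and identifiability passes from `D` to `F`.
-/

section FiberSum

variable {α β γ M : Type*} [Fintype α] [DecidableEq β] [DecidableEq γ] [AddCommMonoid M]

lemma sum_fiber_comp_eq_sum_image (f : α → β) (e : β → γ) (u : α → M) (c : γ) :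
    ∑ a with e (f a) = c, u a =
      ∑ b ∈ Finset.univ.image f with e b = c, ∑ a with f a = b, u a := by
  have maps_to (a : α) (ha : a ∈ Finset.univ.filter fun a => e (f a) = c) :
      f a ∈ (Finset.univ.image f).filter fun b => e b = c := by
    simpa using ha
  rw [← Finset.sum_fiberwise_of_maps_to maps_to]
  refine Finset.sum_congr rfl fun b hb => ?_
  have fiber_subset (a : α) (hab : f a = b) : e (f a) = c :=
    hab ▸ (Finset.mem_filter.mp hb).2
  rw [Finset.filter_filter]
  exact Finset.sum_congr (Finset.filter_congr fun a _ => and_iff_right_of_imp (fiber_subset a))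
    fun _ _ => rfl

lemma sum_fiber_congr_of_factorsThrough {f : α → β} {g : α → γ} (hgf : g.FactorsThrough f)
    {u v : α → M} (huv : ∀ b, ∑ a with f a = b, u a = ∑ a with f a = b, v a) (c : γ) :
    ∑ a with g a = c, u a = ∑ a with g a = c, v a := by
  have : Nonempty γ := ⟨c⟩
  obtain ⟨e, rfl⟩ := (Function.factorsThrough_iff g).mp hgf
  simp only [Function.comp_apply, sum_fiber_comp_eq_sum_image, huv]

end FiberSum

/-- Position `t` of the realization `x` is an endpoint of a transition recorded by the filter `F`,
so that its state is kept by `phi F`. Indexing by transitions `i : Fin n` instead of neighbouring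
positions avoids the boundary cases and the junk values of `extChain`. -/
def IsRetained {n : ℕ} (F : Fin k → Fin k → Bool) (x : Fin (n + 1) → Fin k)
    (t : Fin (n + 1)) : Prop :=
  ∃ i : Fin n, F (x i.castSucc) (x i.succ) = true ∧ (t = i.castSucc ∨ t = i.succ)

section Filter

variable {n : ℕ} {D F : Fin k → Fin k → Bool} {x x' : Fin (n + 1) → Fin k} {t : Fin (n + 1)}

lemma extChain_val (x : Fin (n + 1) → Fin k) (t : Fin (n + 1)) : extChain x t = x t :=
  congrArg x (Fin.ext (Nat.mod_eq_of_lt t.isLt))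

lemma isRetained_iff :
    IsRetained F x t ↔
      (0 < (t : ℕ) ∧ F (extChain x ((t : ℕ) - 1)) (x t) = true) ∨
        ((t : ℕ) + 1 < n + 1 ∧ F (x t) (extChain x ((t : ℕ) + 1)) = true) := by
  constructor
  · rintro ⟨i, hi, rfl | rfl⟩
    · exact .inr ⟨i.succ.isLt, by rwa [← extChain_val x i.succ] at hi⟩
    · exact .inl ⟨i.succ_pos, by rwa [← extChain_val x i.castSucc] at hi⟩
  · rintro (⟨ht, hF⟩ | ⟨ht, hF⟩)
    · obtain ⟨i, rfl⟩ := Fin.exists_succ_eq.mpr (Fin.pos_iff_ne_zero.mp ht)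
      exact ⟨i, by rwa [← extChain_val x i.castSucc], .inr rfl⟩
    · refine ⟨⟨t, Nat.lt_of_succ_lt_succ ht⟩, ?_, .inl rfl⟩
      rwa [← extChain_val x (Fin.succ _)]

lemma phi_apply (F : Fin k → Fin k → Bool) (x : Fin (n + 1) → Fin k) (t : Fin (n + 1)) :
    phi F x t = if IsRetained F x t then some (x t) else none := by
  simp only [phi, isRetained_iff]

lemma IsRetained.mono (hDF : D ≤ F) (ht : IsRetained D x t) : IsRetained F x t :=
  let ⟨i, hi, hti⟩ := ht
  ⟨i, hDF _ _ hi, hti⟩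

lemma IsRetained.eq_of_phi_eq (ht : IsRetained F x t) (h : phi F x = phi F x') : x t = x' t := by
  have h_some : some (x t) = if IsRetained F x' t then some (x' t) else none := by
    rw [← phi_apply, ← h, phi_apply, if_pos ht]
  split_ifs at h_some
  exact Option.some.inj h_some

lemma IsRetained.of_phi_eq (hDF : D ≤ F) (ht : IsRetained D x t) (h : phi F x = phi F x') :
    IsRetained D x' t := by
  obtain ⟨i, hi, hti⟩ := ht
  have eq_of_endpoint {s} (hs : s = i.castSucc ∨ s = i.succ) : x s = x' s :=
    (IsRetained.mono hDF ⟨i, hi, hs⟩).eq_of_phi_eq h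
  refine ⟨i, ?_, hti⟩
  rwa [← eq_of_endpoint (.inl rfl), ← eq_of_endpoint (.inr rfl)]

lemma phi_factorsThrough_phi (hDF : D ≤ F) :
    (phi D : (Fin (n + 1) → Fin k) → _).FactorsThrough (phi F) := by
  intro x x' h
  funext t
  have retained_iff : IsRetained D x t ↔ IsRetained D x' t :=
    ⟨fun ht => ht.of_phi_eq hDF h, fun ht => ht.of_phi_eq hDF h.symm⟩
  simp only [phi_apply, ← retained_iff]
  split_ifs with ht
  · rw [(ht.mono hDF).eq_of_phi_eq h]
  · rfl

end Filter

section Identifiability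

variable {D F : Fin k → Fin k → Bool}

lemma obsDist_apply (n : ℕ) (p : Fin k → Fin k → ℝ) (s : Fin k) (F : Fin k → Fin k → Bool)
    (y : Fin (n + 1) → Option (Fin k)) :
    obsDist n p s F y = ∑ x with phi F x = y, chainProb p s x :=
  (Finset.sum_filter _ _).symm

lemma obsDist_eq_of_le (hDF : D ≤ F) {n : ℕ} {p q : Fin k → Fin k → ℝ} {s : Fin k}
    (h : obsDist n p s F = obsDist n q s F) : obsDist n p s D = obsDist n q s D := by
  have fiber_sums_eq (z : Fin (n + 1) → Option (Fin k)) :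
      ∑ x with phi F x = z, chainProb p s x = ∑ x with phi F x = z, chainProb q s x := by
    rw [← obsDist_apply, ← obsDist_apply, h]
  funext y
  rw [obsDist_apply, obsDist_apply]
  exact sum_fiber_congr_of_factorsThrough (phi_factorsThrough_phi hDF) fiber_sums_eq y

lemma Identifiable.mono (hDF : D ≤ F) (hD : Identifiable k D) : Identifiable k F :=
  fun p q hp hq hpq =>
    let ⟨n, s, hne⟩ := hD p q hp hq hpq
    ⟨n, s, fun h => hne (obsDist_eq_of_le hDF h)⟩

end Identifiability

/-- If `𝒟` is a subclass of the class of all `k × k` filter matrices and every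
filter matrix in `𝒟` is identifiable (`𝒟 ⊆ 𝓘`), then every filter matrix in the
closure `𝒟̄ = {F : F ⪰ D for some D ∈ 𝒟}` is identifiable (`𝒟̄ ⊆ 𝓘`). -/
theorem statement_3 {k : ℕ} (𝒟 : Set (Fin k → Fin k → Bool))
    (h𝒟 : ∀ D ∈ 𝒟, Identifiable k D) :
    ∀ F : Fin k → Fin k → Bool,
      (∃ D ∈ 𝒟, ∀ i j, D i j = true → F i j = true) → Identifiable k F := by
  rintro F ⟨D, hD, hDF⟩
  exact (h𝒟 D hD).mono hDF

end FilteredMarkov
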